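/- Let ρ be the Gaussian measure on ℝ^d with mean μ and covariance Σ = LLᵀ, realized as the law of μ + L·Z where the coordinates of Z are i.i.d. standard normal. Let H ∈ ℝ^{d'×d}, R ∈ ℝ^{d'×d'} symmetric positive definite, β ∈ ℝ^{d'}, and define the negative log-likelihood h(x) := (1/2)(Hx − β)ᵀ R⁻¹ (Hx − β) and the Kalman–Bucy vector field v(x) := −(1/2) Σ Hᵀ R⁻¹ (Hx + Hμ − 2β). Then the Kalman–Bucy field satisfies the kernel-mean-embedding matching equation for the quadratic kernel: for every y ∈ ℝ^d, −∫ ⟨∇_x k₂(y,x), v(x)⟩ dρ(x) = ∫ k₂(y,x) h(x) dρ(x) − ( ∫ k₂(y,x) dρ(x) )( ∫ h dρ ), where ∇_x k₂(y,x) = 2(⟨y,x⟩ + 1) y. -/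

import Mathlib

open MeasureTheory Matrix ProbabilityTheory

/-- The standard Gaussian measure on `ℝ^d`, with i.i.d. standard normal coordinates. -/
noncomputable def stdGaussianPi (d : ℕ) : Measure (Fin d → ℝ) :=
  Measure.pi fun _ : Fin d => gaussianReal 0 1

/-- The Gaussian random vector `X = μ + L·Z`, realizing `N(μ, LLᵀ)`. -/
noncomputable def gaussX {d : ℕ} (μ : Fin d → ℝ) (L : Matrix (Fin d) (Fin d) ℝ)
    (z : Fin d → ℝ) : Fin d → ℝ := μ + L.mulVec z

/-- The Gaussian negative log-likelihood `h(x) = (1/2)(Hx-β)ᵀR⁻¹(Hx-β)`. -/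
noncomputable def negLogLik {d d' : ℕ} (H : Matrix (Fin d') (Fin d) ℝ)
    (R : Matrix (Fin d') (Fin d') ℝ) (β : Fin d' → ℝ) (x : Fin d → ℝ) : ℝ :=
  (1 / 2) * ((H.mulVec x - β) ⬝ᵥ R⁻¹.mulVec (H.mulVec x - β))

/-- The Kalman–Bucy vector field `v(x) = -(1/2) Σ Hᵀ R⁻¹ (Hx + Hμ - 2β)`. -/
noncomputable def kalmanBucyField {d d' : ℕ} (μ : Fin d → ℝ) (S : Matrix (Fin d) (Fin d) ℝ)
    (H : Matrix (Fin d') (Fin d) ℝ) (R : Matrix (Fin d') (Fin d') ℝ) (β : Fin d' → ℝ)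
    (x : Fin d → ℝ) : Fin d → ℝ :=
  -((1 / 2 : ℝ) • (S * Hᵀ * R⁻¹).mulVec (H.mulVec x + H.mulVec μ - (2 : ℝ) • β))

/-!
The potential `h` is quadratic, so the Kalman–Bucy field is `v(x) = -(1/2) Σ (∇h(x) + ∇h(μ))`.
In the standard Gaussian coordinates `z` of `X = μ + Lz` this reads `h(X) = h(μ) + ⟨z, u(z)⟩` and
`v(X) = -L u(z)` for a single affine field `u(z) = a + Bz`. For `F(z) = f(X)`, Gaussian integration
by parts applied to the vector field `F u` gives `E[F ⟨z, u⟩] = E[DF(u)] + tr(B) E[F]`. Taking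
`F = 1` gives `E[⟨z, u⟩] = tr B`, so the trace cancels in the covariance of `f(X)` and `h(X)`, and
`Cov(f(X), h(X)) = E[DF(u)] = -E[Df(X)(v(X))]` for every test function `f` such that `f(X)` and
`Df(X)` are square integrable, the quadratic kernel being one of them.
-/

section RealStein

open scoped NNReal

variable {m : ℝ} {v : ℝ≥0} {f f' : ℝ → ℝ}

theorem hasDerivAt_gaussianPDFReal (m : ℝ) (v : ℝ≥0) (x : ℝ) :
    HasDerivAt (gaussianPDFReal m v) (-((x - m) / v) * gaussianPDFReal m v x) x := by
  have hexponent : HasDerivAt (fun x ↦ -(x - m) ^ 2 / (2 * v)) (-((x - m) / v)) x := by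
    convert! ((((hasDerivAt_id x).sub_const m).pow 2).neg.div_const (2 * (v : ℝ))) using 1
    simp only [id_eq]
    ring
  rw [gaussianPDFReal_def]
  convert! hexponent.exp.const_mul (√(2 * Real.pi * v))⁻¹ using 1
  ring

theorem integrable_gaussianReal_iff (hv : v ≠ 0) :
    Integrable f (gaussianReal m v) ↔ Integrable fun x ↦ gaussianPDFReal m v x * f x := by
  rw [gaussianReal_of_var_ne_zero m hv, integrable_withDensity_iff_integrable_smul'
    (measurable_gaussianPDF m v) (.of_forall fun _ ↦ gaussianPDF_lt_top)]
  simp only [toReal_gaussianPDF, smul_eq_mul]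

theorem integral_sub_mean_mul_gaussianReal (hf : ∀ x, HasDerivAt f (f' x) x)
    (hf_int : Integrable f (gaussianReal m v))
    (hmul_int : Integrable (fun x ↦ (x - m) * f x) (gaussianReal m v))
    (hf'_int : Integrable f' (gaussianReal m v)) :
    ∫ x, (x - m) * f x ∂gaussianReal m v = v * ∫ x, f' x ∂gaussianReal m v := by
  obtain rfl | hv := eq_or_ne v 0
  · simp
  have hv' : (v : ℝ) ≠ 0 := NNReal.coe_ne_zero.mpr hv
  rw [integrable_gaussianReal_iff hv] at hf_int hmul_int hf'_int
  have hparts := integral_mul_deriv_eq_deriv_mul_of_integrable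
    (fun x _ ↦ hasDerivAt_gaussianPDFReal m v x) (fun x _ ↦ hf x) hf'_int
    ((hmul_int.const_mul (-(v : ℝ)⁻¹)).congr (.of_forall fun x ↦ by simp only [Pi.mul_apply]; ring))
    hf_int
  simp only [integral_gaussianReal_eq_integral_smul hv, smul_eq_mul, hparts,
    ← integral_neg, ← integral_const_mul]
  congr with x
  field_simp

end RealStein

section Slices

variable {n : ℕ} {α : Fin (n + 1) → Type*} [∀ j, MeasurableSpace (α j)]
  {ν : ∀ j, Measure (α j)} [∀ j, SigmaFinite (ν j)]
  {E : Type*} [NormedAddCommGroup E] {G : (∀ j, α j) → E}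

theorem integrable_insertNth_prod_pi (hG : Integrable G (Measure.pi ν)) (i : Fin (n + 1)) :
    Integrable (fun p : α i × (∀ j, α (i.succAbove j)) ↦ G (i.insertNth p.1 p.2))
      ((ν i).prod (Measure.pi fun j ↦ ν (i.succAbove j))) :=
  ((measurePreserving_piFinSuccAbove ν i).symm.integrable_comp_emb
    (MeasurableEquiv.measurableEmbedding _)).mpr hG

theorem ae_integrable_insertNth_pi (hG : Integrable G (Measure.pi ν)) (i : Fin (n + 1)) :
    ∀ᵐ w ∂Measure.pi fun j ↦ ν (i.succAbove j),
      Integrable (fun t ↦ G (i.insertNth t w)) (ν i) :=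
  (integrable_insertNth_prod_pi hG i).prod_left_ae

theorem integral_pi_eq_integral_insertNth [NormedSpace ℝ E] (hG : Integrable G (Measure.pi ν))
    (i : Fin (n + 1)) :
    ∫ z, G z ∂Measure.pi ν =
      ∫ w, ∫ t, G (i.insertNth t w) ∂ν i ∂Measure.pi fun j ↦ ν (i.succAbove j) := by
  rw [← integral_prod_symm _ (integrable_insertNth_prod_pi hG i)]
  exact ((measurePreserving_piFinSuccAbove ν i).symm.integral_comp' (g := G)).symm

end Slices

theorem memLp_two_mul_of_memLp_four {Ω 𝕜 : Type*} [MeasurableSpace Ω] [NormedRing 𝕜]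
    {P : Measure Ω} {f g : Ω → 𝕜} (hf : MemLp f 4 P) (hg : MemLp g 4 P) :
    MemLp (fun ω ↦ f ω * g ω) 2 P :=
  have : ENNReal.HolderTriple 4 4 2 := .of_toReal ⟨by norm_num, by norm_num, by norm_num⟩
  hg.mul' hf

section StdGaussian

variable {d : ℕ}

instance isProbabilityMeasure_stdGaussianPi : IsProbabilityMeasure (stdGaussianPi d) :=
  inferInstanceAs (IsProbabilityMeasure (Measure.pi _))

theorem memLp_id_stdGaussianPi {p : ENNReal} (hp : p ≠ ⊤) : MemLp id p (stdGaussianPi d) :=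
  .of_eval fun i ↦ (memLp_id_gaussianReal' p hp).comp_measurePreserving (measurePreserving_eval _ i)

theorem memLp_affine_stdGaussianPi {d' : ℕ} (a : Fin d' → ℝ) (B : Matrix (Fin d') (Fin d) ℝ)
    {p : ENNReal} (hp : p ≠ ⊤) : MemLp (fun z ↦ a + B *ᵥ z) p (stdGaussianPi d) :=
  (memLp_const a).add
    ((memLp_id_stdGaussianPi hp).continuousLinearMap_comp (toLin' B).toContinuousLinearMap)

theorem hasDerivAt_insertNth_of_hasLineDerivAt {n : ℕ} {F : (Fin (n + 1) → ℝ) → ℝ} {F' : ℝ}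
    {i : Fin (n + 1)} {t : ℝ} {w : Fin n → ℝ}
    (hF : HasLineDerivAt ℝ F F' (i.insertNth t w) (Pi.single i 1)) :
    HasDerivAt (fun t ↦ F (i.insertNth t w)) F' t := by
  have hline (s : ℝ) :
      i.insertNth t w + s • Pi.single i (1 : ℝ) = i.insertNth (α := fun _ ↦ ℝ) (t + s) w := by
    ext j
    obtain rfl | ⟨j, rfl⟩ := i.eq_self_or_eq_succAbove j <;> simp
  simp only [HasLineDerivAt, hline] at hF
  convert! HasDerivAt.comp_sub_const t t (by rwa [sub_self]) using 4
  exact (add_sub_cancel t _).symm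

theorem integral_eval_mul_stdGaussianPi {F F' : (Fin d → ℝ) → ℝ} (i : Fin d)
    (hF : ∀ z, HasLineDerivAt ℝ F (F' z) z (Pi.single i 1))
    (hF_int : Integrable F (stdGaussianPi d))
    (hmul_int : Integrable (fun z ↦ z i * F z) (stdGaussianPi d))
    (hF'_int : Integrable F' (stdGaussianPi d)) :
    ∫ z, z i * F z ∂stdGaussianPi d = ∫ z, F' z ∂stdGaussianPi d := by
  obtain _ | n := d
  · exact i.elim0
  rw [stdGaussianPi, integral_pi_eq_integral_insertNth hmul_int i,
    integral_pi_eq_integral_insertNth hF'_int i]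
  refine integral_congr_ae ?_
  filter_upwards [ae_integrable_insertNth_pi hF_int i, ae_integrable_insertNth_pi hmul_int i,
    ae_integrable_insertNth_pi hF'_int i] with w hF_w hmul_w hF'_w
  have hderiv (t : ℝ) := hasDerivAt_insertNth_of_hasLineDerivAt (hF (i.insertNth t w))
  simpa using integral_sub_mean_mul_gaussianReal hderiv hF_w (by simpa using hmul_w) hF'_w

theorem hasLineDerivAt_mul_affine_apply {F : (Fin d → ℝ) → ℝ} {z : Fin d → ℝ}
    (hF : DifferentiableAt ℝ F z) (a : Fin d → ℝ) (B : Matrix (Fin d) (Fin d) ℝ) (i : Fin d) :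
    HasLineDerivAt ℝ (fun z ↦ F z * (a + B *ᵥ z) i)
      (fderiv ℝ F z (Pi.single i 1) * (a + B *ᵥ z) i + F z * B i i) z (Pi.single i 1) := by
  have haffine : HasLineDerivAt ℝ (fun z ↦ (a + B *ᵥ z) i) (B i i) z (Pi.single i 1) := by
    simpa [HasLineDerivAt, mulVec_add, mulVec_smul, add_assoc] using
      (((hasDerivAt_id (0 : ℝ)).mul_const (B i i)).const_add ((B *ᵥ z) i)).const_add (a i)
  convert! HasDerivAt.mul (hF.hasFDerivAt.hasLineDerivAt (Pi.single i 1)) haffine using 1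
  simp only [zero_smul, add_zero]
  rfl

theorem continuousLinearMap_apply_eq_sum_single {ι : Type*} [Fintype ι] [DecidableEq ι]
    (A : (ι → ℝ) →L[ℝ] ℝ) (u : ι → ℝ) : A u = ∑ i, A (Pi.single i 1) * u i := by
  conv_lhs => rw [pi_eq_sum_univ' u]
  simp [mul_comm]

variable {F : (Fin d → ℝ) → ℝ}

theorem integrable_eval_mul_mul_affine_stdGaussianPi (hF : MemLp F 2 (stdGaussianPi d))
    (a : Fin d → ℝ) (B : Matrix (Fin d) (Fin d) ℝ) (i : Fin d) :
    Integrable (fun z ↦ z i * (F z * (a + B *ᵥ z) i)) (stdGaussianPi d) := by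
  have hcoord : MemLp (fun z : Fin d → ℝ ↦ z i) 4 (stdGaussianPi d) :=
    (memLp_id_stdGaussianPi (by simp)).eval i
  have haffine := (memLp_affine_stdGaussianPi a B (p := 4) (by simp)).eval i
  simpa only [Pi.mul_def, mul_left_comm] using
    hF.integrable_mul (memLp_two_mul_of_memLp_four hcoord haffine)

theorem integrable_fderiv_single_mul_affine_stdGaussianPi
    (hF' : MemLp (fderiv ℝ F) 2 (stdGaussianPi d))
    (a : Fin d → ℝ) (B : Matrix (Fin d) (Fin d) ℝ) (i : Fin d) :
    Integrable (fun z ↦ fderiv ℝ F z (Pi.single i 1) * (a + B *ᵥ z) i) (stdGaussianPi d) :=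
  (hF'.continuousLinearMap_comp (.apply ℝ ℝ (Pi.single i 1))).integrable_mul
    ((memLp_affine_stdGaussianPi a B (p := 2) (by simp)).eval i)

theorem integral_eval_mul_mul_affine_stdGaussianPi (hF : Differentiable ℝ F)
    (hF_L2 : MemLp F 2 (stdGaussianPi d)) (hF'_L2 : MemLp (fderiv ℝ F) 2 (stdGaussianPi d))
    (a : Fin d → ℝ) (B : Matrix (Fin d) (Fin d) ℝ) (i : Fin d) :
    ∫ z, z i * (F z * (a + B *ᵥ z) i) ∂stdGaussianPi d =
      ∫ z, fderiv ℝ F z (Pi.single i 1) * (a + B *ᵥ z) i ∂stdGaussianPi d +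
        B i i * ∫ z, F z ∂stdGaussianPi d := by
  have hpartial_int := integrable_fderiv_single_mul_affine_stdGaussianPi hF'_L2 a B i
  have hdiv_int : Integrable (fun z ↦ F z * B i i) (stdGaussianPi d) :=
    (hF_L2.integrable (by simp)).mul_const _
  have haffine_L2 := (memLp_affine_stdGaussianPi a B (p := 2) (by simp)).eval i
  rw [integral_eval_mul_stdGaussianPi i (fun z ↦ hasLineDerivAt_mul_affine_apply (hF z) a B i)
    (hF_L2.integrable_mul haffine_L2) (integrable_eval_mul_mul_affine_stdGaussianPi hF_L2 a B i)
    (hpartial_int.add hdiv_int), integral_add hpartial_int hdiv_int, integral_mul_const,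
    mul_comm (B i i)]

theorem mul_dotProduct_eq_sum_eval_mul {ι R : Type*} [Fintype ι] [CommSemiring R] (r : R)
    (z u : ι → R) :
    r * (z ⬝ᵥ u) = ∑ i, z i * (r * u i) := by
  simp only [dotProduct, Finset.mul_sum, mul_left_comm]

theorem integrable_mul_dotProduct_affine_stdGaussianPi (hF : MemLp F 2 (stdGaussianPi d))
    (a : Fin d → ℝ) (B : Matrix (Fin d) (Fin d) ℝ) :
    Integrable (fun z ↦ F z * (z ⬝ᵥ (a + B *ᵥ z))) (stdGaussianPi d) := by
  simp only [mul_dotProduct_eq_sum_eval_mul]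
  exact integrable_finsetSum _ fun i _ ↦ integrable_eval_mul_mul_affine_stdGaussianPi hF a B i

theorem integral_mul_dotProduct_affine_stdGaussianPi (hF : Differentiable ℝ F)
    (hF_L2 : MemLp F 2 (stdGaussianPi d)) (hF'_L2 : MemLp (fderiv ℝ F) 2 (stdGaussianPi d))
    (a : Fin d → ℝ) (B : Matrix (Fin d) (Fin d) ℝ) :
    ∫ z, F z * (z ⬝ᵥ (a + B *ᵥ z)) ∂stdGaussianPi d =
      ∫ z, fderiv ℝ F z (a + B *ᵥ z) ∂stdGaussianPi d + B.trace * ∫ z, F z ∂stdGaussianPi d := by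
  simp only [mul_dotProduct_eq_sum_eval_mul]
  simp_rw [fun z ↦ continuousLinearMap_apply_eq_sum_single (fderiv ℝ F z) (a + B *ᵥ z)]
  rw [integral_finsetSum _ fun i _ ↦ integrable_eval_mul_mul_affine_stdGaussianPi hF_L2 a B i,
    integral_finsetSum _ fun i _ ↦ integrable_fderiv_single_mul_affine_stdGaussianPi hF'_L2 a B i]
  simp only [integral_eval_mul_mul_affine_stdGaussianPi hF hF_L2 hF'_L2, Finset.sum_add_distrib,
    ← Finset.sum_mul, trace, diag_apply]

theorem integral_mul_quadratic_sub_stdGaussianPi (hF : Differentiable ℝ F)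
    (hF_L2 : MemLp F 2 (stdGaussianPi d)) (hF'_L2 : MemLp (fderiv ℝ F) 2 (stdGaussianPi d))
    (a : Fin d → ℝ) (B : Matrix (Fin d) (Fin d) ℝ) (c : ℝ) :
    ∫ z, F z * (c + z ⬝ᵥ (a + B *ᵥ z)) ∂stdGaussianPi d -
        (∫ z, F z ∂stdGaussianPi d) * ∫ z, (c + z ⬝ᵥ (a + B *ᵥ z)) ∂stdGaussianPi d =
      ∫ z, fderiv ℝ F z (a + B *ᵥ z) ∂stdGaussianPi d := by
  have hmul : ∫ z, F z * (c + z ⬝ᵥ (a + B *ᵥ z)) ∂stdGaussianPi d =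
      (∫ z, F z ∂stdGaussianPi d) * c + ∫ z, F z * (z ⬝ᵥ (a + B *ᵥ z)) ∂stdGaussianPi d := by
    simp only [mul_add]
    rw [integral_add ((hF_L2.integrable (by simp)).mul_const c)
      (integrable_mul_dotProduct_affine_stdGaussianPi hF_L2 a B), integral_mul_const]
  have hone_L2 : MemLp (fun _ ↦ (1 : ℝ)) 2 (stdGaussianPi d) := memLp_const 1
  have hone'_L2 : MemLp (fderiv ℝ fun _ : Fin d → ℝ ↦ (1 : ℝ)) 2 (stdGaussianPi d) := by
    rw [fderiv_fun_const]
    exact memLp_const (0 : (Fin d → ℝ) →L[ℝ] ℝ)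
  have hmean : ∫ z, (c + z ⬝ᵥ (a + B *ᵥ z)) ∂stdGaussianPi d = c + B.trace := by
    have hquad_int := integrable_mul_dotProduct_affine_stdGaussianPi hone_L2 a B
    have hstein :=
      integral_mul_dotProduct_affine_stdGaussianPi (differentiable_const 1) hone_L2 hone'_L2 a B
    simp only [one_mul] at hquad_int hstein
    rw [integral_add (integrable_const c) hquad_int, hstein]
    simp
  rw [hmul, hmean, integral_mul_dotProduct_affine_stdGaussianPi hF hF_L2 hF'_L2]
  ring

end StdGaussian

section GaussianVector

variable {d d' : ℕ}

/-- The quadratic potential `(1/2)(Hx-β)ᵀW(Hx-β)`, which is the negative log-likelihood `negLogLik`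
with an arbitrary, possibly singular, weight `W` in place of `R⁻¹`. -/
noncomputable def quadraticPotential (H : Matrix (Fin d') (Fin d) ℝ)
    (W : Matrix (Fin d') (Fin d') ℝ) (β : Fin d' → ℝ) (x : Fin d → ℝ) : ℝ :=
  1 / 2 * ((H *ᵥ x - β) ⬝ᵥ W *ᵥ (H *ᵥ x - β))

/-- The field `-(1/2) Σ Hᵀ W (Hx + Hμ - 2β)`, which is the Kalman–Bucy field `kalmanBucyField` with
an arbitrary, possibly singular, weight `W` in place of `R⁻¹`. -/
noncomputable def weightedKalmanBucyField (μ : Fin d → ℝ) (S : Matrix (Fin d) (Fin d) ℝ)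
    (H : Matrix (Fin d') (Fin d) ℝ) (W : Matrix (Fin d') (Fin d') ℝ) (β : Fin d' → ℝ)
    (x : Fin d → ℝ) : Fin d → ℝ :=
  -((1 / 2 : ℝ) • (S * Hᵀ * W) *ᵥ (H *ᵥ x + H *ᵥ μ - (2 : ℝ) • β))

theorem hasFDerivAt_gaussX (μ : Fin d → ℝ) (L : Matrix (Fin d) (Fin d) ℝ) (z : Fin d → ℝ) :
    HasFDerivAt (gaussX μ L) (toLin' L).toContinuousLinearMap z :=
  (toLin' L).toContinuousLinearMap.hasFDerivAt.const_add μ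

theorem fderiv_comp_gaussX {f : (Fin d → ℝ) → ℝ} {μ : Fin d → ℝ} {L : Matrix (Fin d) (Fin d) ℝ}
    {z : Fin d → ℝ} (hf : DifferentiableAt ℝ f (gaussX μ L z)) :
    fderiv ℝ (fun z ↦ f (gaussX μ L z)) z =
      (fderiv ℝ f (gaussX μ L z)).comp (toLin' L).toContinuousLinearMap :=
  (hf.hasFDerivAt.comp z (hasFDerivAt_gaussX μ L z)).fderiv

theorem quadraticPotential_gaussX (μ : Fin d → ℝ) (L : Matrix (Fin d) (Fin d) ℝ)
    (H : Matrix (Fin d') (Fin d) ℝ) {W : Matrix (Fin d') (Fin d') ℝ} (hW : W.IsSymm)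
    (β : Fin d' → ℝ) (z : Fin d → ℝ) :
    quadraticPotential H W β (gaussX μ L z) =
      quadraticPotential H W β μ +
        z ⬝ᵥ ((Lᵀ * Hᵀ * W) *ᵥ (H *ᵥ μ - β) +
          ((1 / 2 : ℝ) • (Lᵀ * Hᵀ * W * H * L)) *ᵥ z) := by
  have hadjoint (u : Fin d' → ℝ) :
      z ⬝ᵥ (Lᵀ * Hᵀ * W) *ᵥ u = (H *ᵥ L *ᵥ z) ⬝ᵥ W *ᵥ u := by
    rw [← mulVec_mulVec, dotProduct_mulVec, ← transpose_mul, vecMul_transpose, mulVec_mulVec]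
  have hsymm : (H *ᵥ μ - β) ⬝ᵥ W *ᵥ (H *ᵥ L *ᵥ z) = (H *ᵥ L *ᵥ z) ⬝ᵥ W *ᵥ (H *ᵥ μ - β) := by
    rw [dotProduct_mulVec, ← mulVec_transpose, hW.eq, dotProduct_comm]
  have hresidual : H *ᵥ gaussX μ L z - β = (H *ᵥ μ - β) + H *ᵥ L *ᵥ z := by
    rw [gaussX, mulVec_add]
    abel
  rw [quadraticPotential, quadraticPotential, hresidual, dotProduct_add z, smul_mulVec,
    dotProduct_smul, smul_eq_mul, Matrix.mul_assoc _ H, ← mulVec_mulVec _ _ (H * L), hadjoint,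
    hadjoint, ← mulVec_mulVec]
  simp only [mulVec_add, add_dotProduct, dotProduct_add, hsymm]
  ring

theorem weightedKalmanBucyField_gaussX (μ : Fin d → ℝ) (L : Matrix (Fin d) (Fin d) ℝ)
    (H : Matrix (Fin d') (Fin d) ℝ) (W : Matrix (Fin d') (Fin d') ℝ) (β : Fin d' → ℝ)
    (z : Fin d → ℝ) :
    weightedKalmanBucyField μ (L * Lᵀ) H W β (gaussX μ L z) =
      -(L *ᵥ ((Lᵀ * Hᵀ * W) *ᵥ (H *ᵥ μ - β) +
        ((1 / 2 : ℝ) • (Lᵀ * Hᵀ * W * H * L)) *ᵥ z)) := by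
  have hresidual : H *ᵥ gaussX μ L z + H *ᵥ μ - (2 : ℝ) • β =
      (2 : ℝ) • (H *ᵥ μ - β) + (H * L) *ᵥ z := by
    rw [gaussX, mulVec_add, mulVec_mulVec, smul_sub, two_smul ℝ (H *ᵥ μ)]
    abel
  rw [weightedKalmanBucyField, hresidual]
  simp [mulVec_add, mulVec_smul, smul_mulVec, mulVec_mulVec, Matrix.mul_assoc]

end GaussianVector

theorem stmt15_general {d d' : ℕ} (μ : Fin d → ℝ) (L : Matrix (Fin d) (Fin d) ℝ)
    (H : Matrix (Fin d') (Fin d) ℝ) {W : Matrix (Fin d') (Fin d') ℝ} (hW : W.IsSymm)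
    (β : Fin d' → ℝ) {f : (Fin d → ℝ) → ℝ} (hf : Differentiable ℝ f)
    (hf_L2 : MemLp (fun z ↦ f (gaussX μ L z)) 2 (stdGaussianPi d))
    (hf'_L2 : MemLp (fun z ↦ fderiv ℝ f (gaussX μ L z)) 2 (stdGaussianPi d)) :
    -(∫ z, fderiv ℝ f (gaussX μ L z) (weightedKalmanBucyField μ (L * Lᵀ) H W β (gaussX μ L z))
        ∂stdGaussianPi d) =
      ∫ z, f (gaussX μ L z) * quadraticPotential H W β (gaussX μ L z) ∂stdGaussianPi d -
        (∫ z, f (gaussX μ L z) ∂stdGaussianPi d) *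
          ∫ z, quadraticPotential H W β (gaussX μ L z) ∂stdGaussianPi d := by
  have hF : Differentiable ℝ fun z ↦ f (gaussX μ L z) := fun z ↦
    (hf _).comp z (hasFDerivAt_gaussX μ L z).differentiableAt
  have hF'_L2 : MemLp (fderiv ℝ fun z ↦ f (gaussX μ L z)) 2 (stdGaussianPi d) := by
    simp only [funext fun z ↦ fderiv_comp_gaussX (hf (gaussX μ L z))]
    exact hf'_L2.continuousLinearMap_comp
      ((ContinuousLinearMap.compL ℝ _ _ ℝ).flip (toLin' L).toContinuousLinearMap)
  simp only [quadraticPotential_gaussX μ L H hW β, weightedKalmanBucyField_gaussX μ L H W β]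
  rw [integral_mul_quadratic_sub_stdGaussianPi hF hf_L2 hF'_L2]
  simp [fderiv_comp_gaussX (hf _), integral_neg]

section QuadraticKernel

variable {d : ℕ}

/-- The quadratic kernel `k₂(y, x) = (⟨y, x⟩ + 1)²`, curried so that `quadraticKernel y` is the test
function `x ↦ k₂(y, x)`. -/
def quadraticKernel (y x : Fin d → ℝ) : ℝ := (y ⬝ᵥ x + 1) ^ 2

theorem hasFDerivAt_quadraticKernel (y x : Fin d → ℝ) :
    HasFDerivAt (quadraticKernel y)
      ((2 * (y ⬝ᵥ x + 1)) • (dotProductBilin ℝ ℝ y).toContinuousLinearMap) x := by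
  convert! ((dotProductBilin ℝ ℝ y).toContinuousLinearMap.hasFDerivAt (x := x)).add_const 1 |>.pow 2
    using 1
  simp [mul_add]

theorem fderiv_quadraticKernel_apply (y x u : Fin d → ℝ) :
    fderiv ℝ (quadraticKernel y) x u = 2 * (y ⬝ᵥ x + 1) * (y ⬝ᵥ u) := by
  rw [(hasFDerivAt_quadraticKernel y x).fderiv]
  rfl

theorem memLp_dotProduct_gaussX_add (μ : Fin d → ℝ) (L : Matrix (Fin d) (Fin d) ℝ)
    (y : Fin d → ℝ) (c : ℝ) {p : ENNReal} (hp : p ≠ ⊤) :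
    MemLp (fun z ↦ y ⬝ᵥ gaussX μ L z + c) p (stdGaussianPi d) :=
  ((memLp_affine_stdGaussianPi μ L hp).continuousLinearMap_comp
    (dotProductBilin ℝ ℝ y).toContinuousLinearMap).add (memLp_const c)

theorem memLp_quadraticKernel_gaussX (μ : Fin d → ℝ) (L : Matrix (Fin d) (Fin d) ℝ)
    (y : Fin d → ℝ) :
    MemLp (fun z ↦ quadraticKernel y (gaussX μ L z)) 2 (stdGaussianPi d) := by
  have haffine := memLp_dotProduct_gaussX_add μ L y 1 (p := 4) (by simp)
  simpa only [quadraticKernel, sq] using memLp_two_mul_of_memLp_four haffine haffine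

theorem memLp_fderiv_quadraticKernel_gaussX (μ : Fin d → ℝ) (L : Matrix (Fin d) (Fin d) ℝ)
    (y : Fin d → ℝ) :
    MemLp (fun z ↦ fderiv ℝ (quadraticKernel y) (gaussX μ L z)) 2 (stdGaussianPi d) := by
  simp only [(hasFDerivAt_quadraticKernel y _).fderiv]
  exact ((memLp_dotProduct_gaussX_add μ L y 1 (by simp)).const_mul 2).continuousLinearMap_comp
    (.toSpanSingleton ℝ (dotProductBilin ℝ ℝ y).toContinuousLinearMap)

end QuadraticKernel

/-- For a Gaussian measure `ρ = N(μ, Σ)` with `Σ = LLᵀ`, the Kalman–Bucy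
field satisfies the KME matching equation for the quadratic kernel: for every `y`,
`-∫ ⟨∇_x k₂(y,x), v(x)⟩ dρ(x) = ∫ k₂(y,x) h(x) dρ(x) - (∫ k₂(y,x) dρ(x))(∫ h dρ)`,
where `∇_x k₂(y,x) = 2(⟨y,x⟩+1)y`. -/
theorem stmt15 {d d' : ℕ} (μ : Fin d → ℝ) (L : Matrix (Fin d) (Fin d) ℝ)
    (H : Matrix (Fin d') (Fin d) ℝ) (R : Matrix (Fin d') (Fin d') ℝ)
    (hR : R.PosDef) (hRsymm : R.IsSymm) (β : Fin d' → ℝ) :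
    ∀ y : Fin d → ℝ,
      -(∫ z, (2 * (y ⬝ᵥ gaussX μ L z + 1)) *
          (y ⬝ᵥ kalmanBucyField μ (L * Lᵀ) H R β (gaussX μ L z)) ∂(stdGaussianPi d))
      = (∫ z, (y ⬝ᵥ gaussX μ L z + 1) ^ 2 * negLogLik H R β (gaussX μ L z)
            ∂(stdGaussianPi d))
        - (∫ z, (y ⬝ᵥ gaussX μ L z + 1) ^ 2 ∂(stdGaussianPi d)) *
          (∫ z, negLogLik H R β (gaussX μ L z) ∂(stdGaussianPi d)) := by
  intro y
  have hmatch := stmt15_general μ L H hRsymm.inv β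
    (fun x ↦ (hasFDerivAt_quadraticKernel y x).differentiableAt)
    (memLp_quadraticKernel_gaussX μ L y) (memLp_fderiv_quadraticKernel_gaussX μ L y)
  simp only [fderiv_quadraticKernel_apply] at hmatch
  exact hmatch
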